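/- Let A be a commutative ring, B an A-algebra, M a B-module, and A' a faithfully flat A-algebra. If the base change M ⊗_A A', viewed as a module over B ⊗_A A', is intrinsically of finite presentation over A', then M is intrinsically of finite presentation over A. -/

import Mathlib

/-- An `S`-module `N` is *intrinsically of finite presentation* over `R` if there exist an
`n : ℕ` and an `R`-algebra homomorphism `f : R[x₁, …, xₙ] → S` from a polynomial ring over `R`
such that `N`, viewed as an `R[x₁, …, xₙ]`-module via restriction of scalars along `f`, is
finitely presented. -/
def Module.IntrinsicallyFinitePresentation (R S N : Type*) [CommRing R] [CommRing S]
    [Algebra R S] [AddCommGroup N] [Module S N] : Prop :=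
  ∃ (n : ℕ) (f : MvPolynomial (Fin n) R →ₐ[R] S),
    letI : Module (MvPolynomial (Fin n) R) N := Module.compHom N f.toRingHom
    Module.FinitePresentation (MvPolynomial (Fin n) R) N

open TensorProduct

section BaseChange

variable (A A' B M : Type*) [CommRing A] [CommRing A'] [CommRing B]
  [Algebra A A'] [Algebra A B]
  [AddCommGroup M] [Module A M] [Module B M] [IsScalarTower A B M]

/-- `LinearMap.lTensor` as a ring homomorphism between endomorphism rings. -/
noncomputable def lTensorRingHom : Module.End A M →+* Module.End A (A' ⊗[A] M) where
  toFun f := f.lTensor A'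
  map_one' := LinearMap.lTensor_id A' M
  map_mul' f g := LinearMap.lTensor_comp A' f g
  map_zero' := LinearMap.lTensor_zero A'
  map_add' f g := LinearMap.lTensor_add A' f g

/-- The `B`-module structure on the base change `A' ⊗[A] M`, where `B` acts through the
second tensor factor: `b • (a' ⊗ m) = a' ⊗ (b • m)`. -/
noncomputable def Module.tensorProductRight : Module B (A' ⊗[A] M) :=
  Module.compHom _ ((lTensorRingHom A A' M).comp (Module.toModuleEnd A M))

lemma tensorProductRight_isScalarTower :
    letI : Module B (A' ⊗[A] M) := Module.tensorProductRight A A' B M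
    IsScalarTower A B (A' ⊗[A] M) := by
  letI : Module B (A' ⊗[A] M) := Module.tensorProductRight A A' B M
  have key : ∀ (c : B) (a' : A') (x : M), c • (a' ⊗ₜ[A] x) = a' ⊗ₜ[A] (c • x) := by
    intro c a' x
    show (LinearMap.lTensor A' ((Module.toModuleEnd A M) c)) (a' ⊗ₜ[A] x) = a' ⊗ₜ[A] (c • x)
    simp
  refine ⟨fun a c z => ?_⟩
  induction z with
  | zero => simp only [smul_zero]
  | tmul a' x => simp only [key, smul_assoc, tmul_smul]
  | add u v hu hv => simp only [smul_add, hu, hv]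

lemma tensorProductRight_smulCommClass :
    letI : Module B (A' ⊗[A] M) := Module.tensorProductRight A A' B M
    SMulCommClass A' B (A' ⊗[A] M) := by
  letI : Module B (A' ⊗[A] M) := Module.tensorProductRight A A' B M
  have key : ∀ (c : B) (a' : A') (x : M), c • (a' ⊗ₜ[A] x) = a' ⊗ₜ[A] (c • x) := by
    intro c a' x
    show (LinearMap.lTensor A' ((Module.toModuleEnd A M) c)) (a' ⊗ₜ[A] x) = a' ⊗ₜ[A] (c • x)
    simp
  refine ⟨fun a' c z => ?_⟩
  induction z with
  | zero => simp only [smul_zero]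
  | tmul a'' x => simp only [key, smul_tmul']
  | add u v hu hv => simp only [smul_add, hu, hv]

/-- The natural `B ⊗[A] A'`-module structure (written as `A' ⊗[A] B`, following Mathlib's
conventions) on the base change `M ⊗[A] A'` (written as `A' ⊗[A] M`). -/
noncomputable def Module.tensorProductBaseChange : Module (A' ⊗[A] B) (A' ⊗[A] M) :=
  letI : Module B (A' ⊗[A] M) := Module.tensorProductRight A A' B M
  haveI : IsScalarTower A B (A' ⊗[A] M) := tensorProductRight_isScalarTower A A' B M
  haveI : SMulCommClass A' B (A' ⊗[A] M) := tensorProductRight_smulCommClass A A' B M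
  TensorProduct.Algebra.module

/-!
Write `P = A[x₁, …, xₘ]`. A homomorphism `A'[x₁, …, xₙ] → A' ⊗ B` involves only finitely many
elements of `B`, so it factors as `A'[x₁, …, xₙ] → A' ⊗ P → A' ⊗ B`, where the second map is the
base change of a homomorphism `P → B`. The first map is of finite type, and a module that is
finitely presented over a ring stays so over any finite type algebra through which the action
factors; hence `A' ⊗ M` is finitely presented over `A' ⊗ P`. Since `A' ⊗ M = (A' ⊗ P) ⊗_P M` and
`P → A' ⊗ P` is faithfully flat, `M` is finitely presented over `P`.
-/

section FinitePresentation

variable {R S M N : Type*}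

lemma map_smul_of_forall_mem_of_adjoin_eq_top [CommSemiring R] [Semiring S] [Algebra R S]
    [AddCommMonoid M] [Module R M] [Module S M] [IsScalarTower R S M]
    [AddCommMonoid N] [Module R N] [Module S N] [IsScalarTower R S N]
    {Z : Set S} (hZ : Algebra.adjoin R Z = ⊤) {G : Set M} (hG : Submodule.span R G = ⊤)
    (f : M →ₗ[R] N) (hf : ∀ z ∈ Z, ∀ g ∈ G, f (z • g) = z • f g) (s : S) (m : M) :
    f (s • m) = s • f m := by
  have hs : s ∈ Algebra.adjoin R Z := hZ ▸ Algebra.mem_top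
  induction hs using Algebra.adjoin_induction generalizing m with
  | mem z hz =>
    have : f ∘ₗ Algebra.lsmul R R M z = Algebra.lsmul R R N z ∘ₗ f :=
      LinearMap.ext_on hG (hf z hz)
    exact LinearMap.congr_fun this m
  | algebraMap r => simp only [algebraMap_smul, map_smul]
  | add x y _ _ hx hy => simp only [add_smul, map_add, hx, hy]
  | mul x y _ _ hx hy => simp only [mul_smul, hx, hy]

variable [CommRing R] [CommRing S]

section Algebra

variable [Algebra R S] [AddCommGroup M] [Module R M]

section IsScalarTower

variable [Module S M] [IsScalarTower R S M]

lemma ker_liftBaseChange_id_eq_span {Z : Set S} (hZ : Algebra.adjoin R Z = ⊤)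
    {G : Set M} (hG : Submodule.span R G = ⊤) :
    LinearMap.ker (LinearMap.liftBaseChange S (LinearMap.id : M →ₗ[R] M)) =
      Submodule.span S (Set.image2 (fun z g ↦ z ⊗ₜ[R] g - 1 ⊗ₜ[R] (z • g)) Z G) := by
  set K := Submodule.span S (Set.image2 (fun z g ↦ z ⊗ₜ[R] g - 1 ⊗ₜ[R] (z • g)) Z G)
  refine le_antisymm ?_ (Submodule.span_le.mpr ?_)
  · -- Modulo `K` the map `m ↦ 1 ⊗ m` is `S`-linear, so `K.mkQ` factors through multiplication.
    let q : M →ₗ[R] (S ⊗[R] M) ⧸ K := K.mkQ.restrictScalars R ∘ₗ TensorProduct.mk R S M 1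
    have q_smul (s : S) (m : M) : q (s • m) = s • q m := by
      refine map_smul_of_forall_mem_of_adjoin_eq_top hZ hG q (fun z hz g hg ↦ ?_) s m
      have : z ⊗ₜ[R] g - 1 ⊗ₜ[R] (z • g) ∈ K := Submodule.subset_span ⟨z, hz, g, hg, rfl⟩
      calc K.mkQ (1 ⊗ₜ[R] (z • g))
        _ = K.mkQ (z ⊗ₜ[R] g) := ((Submodule.Quotient.eq K).mpr this).symm
        _ = z • K.mkQ (1 ⊗ₜ[R] g) := by rw [← map_smul, smul_tmul', smul_eq_mul, mul_one]
    let qS : M →ₗ[S] (S ⊗[R] M) ⧸ K := { q with map_smul' := q_smul }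
    have qS_comp : qS ∘ₗ LinearMap.liftBaseChange S LinearMap.id = K.mkQ := by
      ext m
      simp [qS, q]
    calc LinearMap.ker (LinearMap.liftBaseChange S LinearMap.id)
      _ ≤ LinearMap.ker (qS ∘ₗ LinearMap.liftBaseChange S LinearMap.id) :=
        LinearMap.ker_le_ker_comp _ _
      _ = K := by rw [qS_comp, K.ker_mkQ]
  · rintro _ ⟨z, -, g, -, rfl⟩
    simp

variable (R S M) in
lemma finitePresentation_of_finitePresentation_of_finiteType [Algebra.FiniteType R S]
    [Module.FinitePresentation R M] : Module.FinitePresentation S M := by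
  obtain ⟨Z, hZ⟩ := Algebra.FiniteType.out (R := R) (A := S)
  obtain ⟨G, hG⟩ := Module.Finite.fg_top (R := R) (M := M)
  refine Module.finitePresentation_of_surjective (LinearMap.liftBaseChange S LinearMap.id)
    (fun m ↦ ⟨1 ⊗ₜ[R] m, by simp⟩) ?_
  rw [ker_liftBaseChange_id_eq_span hZ hG]
  exact Submodule.fg_span (Z.finite_toSet.image2 _ G.finite_toSet)

end IsScalarTower

variable (S) in
lemma finitePresentation_of_tensorProduct_of_faithfullyFlat [Module.FaithfullyFlat R S]
    [Module.FinitePresentation S (S ⊗[R] M)] : Module.FinitePresentation R M := by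
  have : Module.Finite R M := .of_finite_tensorProduct_of_faithfullyFlat S
  obtain ⟨n, f, hf⟩ := Module.Finite.exists_fin' R M
  have : Module.Finite S (LinearMap.ker (AlgebraTensorModule.lTensor S S f)) :=
    .of_fg (Module.FinitePresentation.fg_ker _ (LinearMap.lTensor_surjective S hf))
  have : Module.Finite S (S ⊗[R] LinearMap.ker f) := .equiv (LinearMap.tensorKerEquiv S S f).symm
  have : Module.Finite R (LinearMap.ker f) := .of_finite_tensorProduct_of_faithfullyFlat S
  exact Module.finitePresentation_of_surjective f hf (Module.Finite.iff_fg.mp this)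

end Algebra

lemma finitePresentation_compHom_of_comp {T : Type*} [CommRing T] [AddCommGroup N] [Module T N]
    (φ : R →+* S) (ψ : S →+* T) (hφ : φ.FiniteType)
    (h : letI := Module.compHom N (ψ.comp φ)
         Module.FinitePresentation R N) :
    letI := Module.compHom N ψ
    Module.FinitePresentation S N := by
  let := φ.toAlgebra
  let := Module.compHom N ψ
  let := Module.compHom N (ψ.comp φ)
  have : IsScalarTower R S N := .of_algebraMap_smul fun _ _ ↦ rfl
  have : Algebra.FiniteType R S := hφ
  exact finitePresentation_of_finitePresentation_of_finiteType R S N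

end FinitePresentation

section Pushout

variable {R S R' S' M N : Type*} [CommRing R] [CommRing S] [CommRing R'] [CommRing S']
  [Algebra R S] [Algebra R R'] [Algebra R S'] [Algebra S S'] [Algebra R' S']
  [IsScalarTower R S S'] [IsScalarTower R R' S'] [Algebra.IsPushout R S R' S']

variable (R S R' S') in
lemma faithfullyFlat_of_isPushout [Module.FaithfullyFlat R S] : Module.FaithfullyFlat R' S' :=
  have : Algebra.IsPushout R R' S S' := .symm inferInstance
  .of_linearEquiv _ _ (Algebra.IsPushout.equiv R R' S S').symm.toLinearEquiv

variable [AddCommGroup M] [Module R M] [Module R' M] [IsScalarTower R R' M]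
  [AddCommGroup N] [Module R N] [Module S N] [Module R' N] [Module S' N]
  [IsScalarTower R S N] [IsScalarTower R R' N] [IsScalarTower S S' N] [IsScalarTower R' S' N]

lemma isBaseChange_of_isPushout (f : M →ₗ[R'] N) (hf : IsBaseChange S (f.restrictScalars R)) :
    IsBaseChange S' f := by
  have comp_eq (x : S ⊗[R] M) :
      f.liftBaseChange S' ((Algebra.IsPushout.cancelBaseChange R S R' S' M).symm x) =
        hf.equiv x := by
    induction x with
    | zero => simp only [map_zero]
    | add x y hx hy => simp only [map_add, hx, hy]
    | tmul s m => simp [hf.equiv_tmul]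
  have bijective : Function.Bijective (f.liftBaseChange S') := by
    rw [← EquivLike.bijective_comp (Algebra.IsPushout.cancelBaseChange R S R' S' M).symm]
    exact (funext comp_eq : _ ∘ _ = _) ▸ hf.equiv.bijective
  exact .of_equiv (.ofBijective _ bijective) fun m ↦ by simp

lemma finitePresentation_of_isBaseChange_of_isPushout [Module.FaithfullyFlat R S]
    [Module.FinitePresentation S' N] (f : M →ₗ[R'] N)
    (hf : IsBaseChange S (f.restrictScalars R)) : Module.FinitePresentation R' M := by
  have : Module.FaithfullyFlat R' S' := faithfullyFlat_of_isPushout R S R' S'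
  have : Module.FinitePresentation S' (S' ⊗[R'] M) :=
    .of_equiv (isBaseChange_of_isPushout (S := S) f hf).equiv.symm
  exact finitePresentation_of_tensorProduct_of_faithfullyFlat S'

end Pushout

section Descent

variable {A A' B M}

lemma exists_mvPolynomial_subset_range_map {s : Set (A' ⊗[A] B)} (hs : s.Finite) :
    ∃ (m : ℕ) (g : MvPolynomial (Fin m) A →ₐ[A] B),
      s ⊆ (Algebra.TensorProduct.map (AlgHom.id A' A') g).range := by
  obtain ⟨N, hN, hsN⟩ := exists_finite_submodule_right_of_setFinite s hs
  obtain ⟨m, b, rfl⟩ :=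
    Submodule.fg_iff_exists_fin_generating_family.mp (Module.Finite.iff_fg.mp hN)
  let g : MvPolynomial (Fin m) A →ₐ[A] B := MvPolynomial.aeval b
  have span_le : Submodule.span A (Set.range b) ≤ LinearMap.range g.toLinearMap := by
    rw [Submodule.span_le]
    rintro _ ⟨i, rfl⟩
    exact ⟨MvPolynomial.X i, MvPolynomial.aeval_X b i⟩
  refine ⟨m, g, hsN.trans ?_⟩
  rintro _ ⟨x, rfl⟩
  rw [SetLike.mem_coe]
  induction x with
  | zero => simpa only [map_zero] using zero_mem _
  | add x y hx hy => simpa only [map_add] using add_mem hx hy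
  | tmul a n =>
    obtain ⟨p, hp : g p = n⟩ := span_le n.2
    exact ⟨a ⊗ₜ[A] p, by simp [hp]⟩

lemma exists_mvPolynomial_map_comp_eq {ι : Type*} [Finite ι]
    (f : MvPolynomial ι A' →ₐ[A'] A' ⊗[A] B) :
    ∃ (m : ℕ) (g : MvPolynomial (Fin m) A →ₐ[A] B)
      (ψ : MvPolynomial ι A' →ₐ[A'] A' ⊗[A] MvPolynomial (Fin m) A),
      (Algebra.TensorProduct.map (AlgHom.id A' A') g).comp ψ = f := by
  obtain ⟨m, g, hg⟩ :=
    exists_mvPolynomial_subset_range_map (Set.finite_range fun i ↦ f (MvPolynomial.X i))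
  choose t ht using fun i ↦ hg (Set.mem_range_self i)
  refine ⟨m, g, MvPolynomial.aeval t, MvPolynomial.algHom_ext fun i ↦ ?_⟩
  rw [AlgHom.comp_apply, MvPolynomial.aeval_X]
  exact ht i

lemma tmul_smul_tmul_tensorProductBaseChange (a a' : A') (b : B) (m : M) :
    letI := Module.tensorProductBaseChange A A' B M
    (a ⊗ₜ[A] b) • (a' ⊗ₜ[A] m) = (a * a') ⊗ₜ[A] (b • m) := by
  let := Module.tensorProductRight A A' B M
  have := tensorProductRight_isScalarTower A A' B M
  have := tensorProductRight_smulCommClass A A' B M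
  have smul_tmul_right : b • (a' ⊗ₜ[A] m) = a' ⊗ₜ[A] (b • m) :=
    LinearMap.lTensor_tmul A' (Module.toModuleEnd A M b) a' m
  refine (TensorProduct.Algebra.smul_def a b (a' ⊗ₜ[A] m)).trans ?_
  rw [smul_tmul_right, smul_tmul', smul_eq_mul]

attribute [local instance] Algebra.TensorProduct.rightAlgebra in
lemma finitePresentation_compHom_of_baseChange [Module.FaithfullyFlat A A']
    {P : Type*} [CommRing P] [Algebra A P] (g : P →ₐ[A] B)
    (h : letI := Module.tensorProductBaseChange A A' B M
         letI := Module.compHom (A' ⊗[A] M)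
           (Algebra.TensorProduct.map (AlgHom.id A' A') g).toRingHom
         Module.FinitePresentation (A' ⊗[A] P) (A' ⊗[A] M)) :
    letI := Module.compHom M g.toRingHom
    Module.FinitePresentation P M := by
  let := Module.tensorProductBaseChange A A' B M
  let := Module.compHom (A' ⊗[A] M) (Algebra.TensorProduct.map (AlgHom.id A' A') g).toRingHom
  let := Module.compHom M g.toRingHom
  let := Module.compHom (A' ⊗[A] M) (algebraMap P (A' ⊗[A] P))
  have tmul_smul_tmul (a a' : A') (p : P) (m : M) :
      (a ⊗ₜ[A] p) • (a' ⊗ₜ[A] m) = (a * a') ⊗ₜ[A] (p • m) :=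
    tmul_smul_tmul_tensorProductBaseChange a a' (g p) m
  have : IsScalarTower A P M := .of_algebraMap_smul fun a m ↦
    (congrArg (· • m) (g.commutes a)).trans (algebraMap_smul B a m)
  have : IsScalarTower P (A' ⊗[A] P) (A' ⊗[A] M) := .of_algebraMap_smul fun _ _ ↦ rfl
  have : IsScalarTower A' (A' ⊗[A] P) (A' ⊗[A] M) := by
    refine .of_algebraMap_smul fun a x ↦ ?_
    rw [Algebra.TensorProduct.algebraMap_apply, Algebra.algebraMap_self_apply]
    induction x with
    | zero => simp only [smul_zero]
    | add x y hx hy => simp only [smul_add, hx, hy]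
    | tmul a' m => rw [tmul_smul_tmul, one_smul, smul_tmul', smul_eq_mul]
  have : IsScalarTower A (A' ⊗[A] P) (A' ⊗[A] M) := .to₁₃₄ A A' _ _
  have : IsScalarTower A P (A' ⊗[A] M) := .to₁₂₄ A P (A' ⊗[A] P) _
  let f : M →ₗ[P] A' ⊗[A] M :=
    { TensorProduct.mk A A' M 1 with
      map_smul' p m :=
        calc (1 : A') ⊗ₜ[A] (p • m)
          _ = (1 * 1) ⊗ₜ[A] (p • m) := by rw [one_mul]
          _ = (1 ⊗ₜ[A] p) • (1 ⊗ₜ[A] m) := (tmul_smul_tmul 1 1 p m).symm }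
  exact finitePresentation_of_isBaseChange_of_isPushout (R := A) (S := A') (S' := A' ⊗[A] P) f
    (TensorProduct.isBaseChange A M A')

end Descent

/-- Let `A` be a commutative ring, `B` an `A`-algebra, `M` a `B`-module, and
`A'` a faithfully flat `A`-algebra. If the base change `M ⊗[A] A'` (written here, following
Mathlib's convention for base change, as `A' ⊗[A] M`), viewed as a module over `B ⊗[A] A'`
(written as `A' ⊗[A] B`), is intrinsically of finite presentation over `A'`, then `M` is
intrinsically of finite presentation over `A`. -/
theorem Module.IntrinsicallyFinitePresentation.of_baseChange_faithfullyFlat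
    [Module.FaithfullyFlat A A']
    (h : letI : Module (A' ⊗[A] B) (A' ⊗[A] M) := Module.tensorProductBaseChange A A' B M
         Module.IntrinsicallyFinitePresentation A' (A' ⊗[A] B) (A' ⊗[A] M)) :
    Module.IntrinsicallyFinitePresentation A B M := by
  let := Module.tensorProductBaseChange A A' B M
  obtain ⟨n, f, hf⟩ := h
  obtain ⟨m, g, ψ, rfl⟩ := exists_mvPolynomial_map_comp_eq f
  have ψ_finiteType : ψ.toRingHom.FiniteType := by
    refine RingHom.FiniteType.of_comp_finiteType (f := algebraMap A' _) ?_
    rw [AlgHom.toRingHom_eq_coe, ψ.comp_algebraMap, RingHom.finiteType_algebraMap]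
    infer_instance
  exact ⟨m, g, finitePresentation_compHom_of_baseChange g
    (finitePresentation_compHom_of_comp ψ.toRingHom _ ψ_finiteType hf)⟩

end BaseChange
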